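/- For every p with 2 < p < ∞ there exists a constant C_p such that for every measurable function f : ℍ → [0,∞], ∫_ℍ (M₂f)^p dμ ≤ C_p ∫_ℍ f^p dμ; that is, the noncentered maximal operator M₂ is bounded on L^p(ℍ) for every p ∈ (2,∞). -/

import Mathlib

open MeasureTheory ENNReal NNReal UpperHalfPlane

noncomputable section

instance : MeasurableSpace UpperHalfPlane := borel UpperHalfPlane

instance : BorelSpace UpperHalfPlane := ⟨rfl⟩

/-- The hyperbolic measure on the upper half-plane: the measure with density
`(Im z)⁻²` with respect to two-dimensional Lebesgue measure. -/
def hypMeasure : Measure UpperHalfPlane :=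
  (Measure.comap (fun z : UpperHalfPlane => (z : ℂ)) volume).withDensity
    fun z => ENNReal.ofReal (1 / z.im ^ 2)

/-- The noncentered maximal function: the supremum of the averages of `f` over all
metric balls (for the hyperbolic distance) containing the point `z`. -/
def M2 (f : UpperHalfPlane → ℝ≥0∞) (z : UpperHalfPlane) : ℝ≥0∞ :=
  ⨆ (c : UpperHalfPlane) (r : ℝ) (_ : 0 < r) (_ : z ∈ Metric.ball c r),
    (hypMeasure (Metric.ball c r))⁻¹ * ∫⁻ w in Metric.ball c r, f w ∂hypMeasure

/-!
Split the balls at radius `2`. On small balls `hypMeasure` is doubling, so Vitali's covering lemma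
gives the weak type `(1, 1)` bound, hence all `L ^ p` bounds with `1 < p`.

A large ball of radius `r` has measure at least a constant times `e ^ r`, while any two of its
points satisfy `|Re z - Re w| < e ^ r * √(Im z * Im w)`. Hence the averages of `f` over the large
balls containing `x + iy` are at most a constant times `√y * G x`, where `G x` is the integral of
`√η * M₁ f(·, η) x` against `dη / η ^ 2` and `M₁` is the maximal operator on `ℝ`. The function `√y`
lies in weak `L²` for `dy / y ^ 2`, so it remains to bound `∫ G ^ 2`. Neither tail of this integral
is controlled by `L²` itself, but an exponent `a < 2` controls the low heights and an exponent
`q > 2` the high ones, so that `∫ G ^ 2` is at most a constant times `∫ f ^ a + ∫ f ^ q`. If the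
values of `f` lie in `{0} ∪ [1, ∞]`, then `f ^ a ≤ f ^ q`, and this is the weak type `(q, q)`
bound, which interpolates with the trivial bound on `L^∞`.
-/

open Set Metric

section Interpolation

lemma lintegral_Ioc_ofReal_rpow {a T : ℝ} (ha : 0 < a) (hT : 0 ≤ T) :
    ∫⁻ s in Ioc 0 T, ENNReal.ofReal (s ^ (a - 1)) = ENNReal.ofReal (T ^ a / a) := by
  have hint : IntegrableOn (fun s : ℝ => s ^ (a - 1)) (Ioc 0 T) :=
    (intervalIntegrable_iff_integrableOn_Ioc_of_le hT).1
      (intervalIntegral.intervalIntegrable_rpow' (by linarith))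
  have hnonneg : 0 ≤ᵐ[volume.restrict (Ioc 0 T)] fun s : ℝ => s ^ (a - 1) := by
    filter_upwards [ae_restrict_mem measurableSet_Ioc] with s hs
    exact Real.rpow_nonneg hs.1.le _
  rw [← ofReal_integral_eq_lintegral_ofReal hint hnonneg, ← intervalIntegral.integral_of_le hT,
    integral_rpow (Or.inl (by linarith)), sub_add_cancel, Real.zero_rpow ha.ne', sub_zero]

lemma lintegral_Ioi_ofReal_rpow {a T : ℝ} (ha : a < 0) (hT : 0 < T) :
    ∫⁻ s in Ioi T, ENNReal.ofReal (s ^ (a - 1)) = ENNReal.ofReal (-T ^ a / a) := by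
  have hnonneg : 0 ≤ᵐ[volume.restrict (Ioi T)] fun s : ℝ => s ^ (a - 1) := by
    filter_upwards [ae_restrict_mem measurableSet_Ioi] with s hs
    exact Real.rpow_nonneg (hT.trans hs).le _
  rw [← ofReal_integral_eq_lintegral_ofReal
      (integrableOn_Ioi_rpow_of_lt (by linarith) hT) hnonneg,
    integral_Ioi_rpow_of_lt (by linarith) hT, sub_add_cancel]

lemma lintegral_Ioi_zero_ofReal_rpow (a : ℝ) :
    ∫⁻ s in Ioi (0 : ℝ), ENNReal.ofReal (s ^ a) = ⊤ := by
  by_contra hne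
  refine not_integrableOn_Ioi_rpow a
    ((lintegral_ofReal_ne_top_iff_integrable (by fun_prop) ?_).1 hne)
  filter_upwards [ae_restrict_mem measurableSet_Ioi] with s hs
  exact Real.rpow_nonneg (le_of_lt hs) _

lemma rpow_eq_lintegral_ofReal_lt {a : ℝ} (ha : 0 < a) (t : ℝ≥0∞) :
    t ^ a = ENNReal.ofReal a *
      ∫⁻ s in {s | ENNReal.ofReal s < t} ∩ Ioi 0, ENNReal.ofReal (s ^ (a - 1)) := by
  obtain rfl | ht := eq_or_ne t ⊤
  · simp only [ENNReal.ofReal_lt_top, ofPred_true, univ_inter, lintegral_Ioi_zero_ofReal_rpow,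
      ENNReal.top_rpow_of_pos ha]
    rw [ENNReal.mul_top (ENNReal.ofReal_pos.2 ha).ne']
  · have hset : {s : ℝ | ENNReal.ofReal s < t} ∩ Ioi 0 = Ioo 0 t.toReal := by
      ext s
      rw [mem_inter_iff, mem_ofPred_eq, mem_Ioi, mem_Ioo, and_comm]
      exact and_congr_right fun hs => ENNReal.ofReal_lt_iff_lt_toReal hs.le ht
    rw [hset, setLIntegral_congr Ioo_ae_eq_Ioc, lintegral_Ioc_ofReal_rpow ha toReal_nonneg,
      ← ENNReal.ofReal_mul ha.le, mul_div_cancel₀ _ ha.ne',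
      ← ENNReal.ofReal_rpow_of_nonneg toReal_nonneg ha.le, ENNReal.ofReal_toReal ht]

variable {X : Type*} [MeasurableSpace X] {μ : Measure X} [SFinite μ]

lemma lintegral_rpow_eq_lintegral_meas_ofReal_lt {f : X → ℝ≥0∞} (hf : Measurable f) {p : ℝ}
    (hp : 0 < p) :
    ∫⁻ x, f x ^ p ∂μ = ENNReal.ofReal p *
      ∫⁻ s in Ioi (0 : ℝ), ENNReal.ofReal (s ^ (p - 1)) * μ {x | ENNReal.ofReal s < f x} := by
  let ν : Measure ℝ :=
    (volume.restrict (Ioi 0)).withDensity fun s => ENNReal.ofReal (s ^ (p - 1))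
  have hA : MeasurableSet {z : X × ℝ | ENNReal.ofReal z.2 < f z.1} :=
    measurableSet_lt (by fun_prop) (by fun_prop)
  have hν (x : X) : f x ^ p = ENNReal.ofReal p * ν {s | ENNReal.ofReal s < f x} := by
    have hs : MeasurableSet {s | ENNReal.ofReal s < f x} :=
      measurableSet_lt (by fun_prop) measurable_const
    rw [rpow_eq_lintegral_ofReal_lt hp, withDensity_apply _ hs, Measure.restrict_restrict hs]
  calc ∫⁻ x, f x ^ p ∂μ
      = ENNReal.ofReal p * ∫⁻ x, ν {s | ENNReal.ofReal s < f x} ∂μ := by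
        simp_rw [hν]
        exact lintegral_const_mul _ (measurable_measure_prodMk_left hA)
    _ = ENNReal.ofReal p * ∫⁻ s, μ {x | ENNReal.ofReal s < f x} ∂ν := by
        congr 1
        exact (Measure.prod_apply hA).symm.trans (Measure.prod_apply_symm hA)
    _ = _ := by
        congr 1
        exact lintegral_withDensity_eq_lintegral_mul _ (by fun_prop)
          (measurable_measure_prodMk_right hA)

-- For the measure `f ^ q • μ` the hypothesis is a distributional inequality, so the layer cake
-- formula with exponent `p - q` undoes the one with exponent `p`.
lemma lintegral_rpow_le_of_meas_lt_le {U f : X → ℝ≥0∞} (hU : Measurable U) (hf : Measurable f)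
    {p q : ℝ} (hq : 0 < q) (hqp : q < p) {K : ℝ≥0}
    (h : ∀ s : ℝ, 0 < s → ENNReal.ofReal (s ^ q) * μ {x | ENNReal.ofReal s < U x} ≤
      K * ∫⁻ x in {x | ENNReal.ofReal s < f x}, f x ^ q ∂μ) :
    ∫⁻ x, U x ^ p ∂μ ≤ K * ENNReal.ofReal (p / (p - q)) * ∫⁻ x, f x ^ p ∂μ := by
  have hpq : 0 < p - q := sub_pos.2 hqp
  set ρ : Measure X := μ.withDensity fun x => f x ^ q
  have hρ : ∫⁻ x, f x ^ (p - q) ∂ρ = ∫⁻ x, f x ^ p ∂μ := by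
    rw [lintegral_withDensity_eq_lintegral_mul _ (by fun_prop) (by fun_prop)]
    refine lintegral_congr fun x => ?_
    rw [Pi.mul_apply, ← ENNReal.rpow_add_of_nonneg _ _ hq.le hpq.le, add_sub_cancel]
  have hlevel : ∀ s ∈ Ioi (0 : ℝ),
      ENNReal.ofReal (s ^ (p - 1)) * μ {x | ENNReal.ofReal s < U x} ≤
        K * (ENNReal.ofReal (s ^ (p - q - 1)) * ρ {x | ENNReal.ofReal s < f x}) := by
    intro s hs
    have hsplit : s ^ (p - 1) = s ^ (p - q - 1) * s ^ q := by
      rw [← Real.rpow_add hs]; ring_nf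
    rw [hsplit, ENNReal.ofReal_mul (Real.rpow_nonneg (le_of_lt hs) _), mul_assoc,
      mul_left_comm (K : ℝ≥0∞), withDensity_apply _ (measurableSet_lt measurable_const hf)]
    exact mul_le_mul_right (h s hs) _
  calc ∫⁻ x, U x ^ p ∂μ
      = ENNReal.ofReal p *
          ∫⁻ s in Ioi (0 : ℝ), ENNReal.ofReal (s ^ (p - 1)) * μ {x | ENNReal.ofReal s < U x} :=
        lintegral_rpow_eq_lintegral_meas_ofReal_lt hU (hq.trans hqp)
    _ ≤ ENNReal.ofReal p * (K * ∫⁻ s in Ioi (0 : ℝ),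
          ENNReal.ofReal (s ^ (p - q - 1)) * ρ {x | ENNReal.ofReal s < f x}) := by
        rw [← lintegral_const_mul' _ _ ENNReal.coe_ne_top]
        exact mul_le_mul_right (setLIntegral_mono' measurableSet_Ioi hlevel) _
    _ = K * ENNReal.ofReal (p / (p - q)) * ∫⁻ x, f x ^ (p - q) ∂ρ := by
        rw [lintegral_rpow_eq_lintegral_meas_ofReal_lt hf hpq, ← mul_assoc _ (ENNReal.ofReal _),
          mul_assoc (K : ℝ≥0∞), ← ENNReal.ofReal_mul (div_pos (hq.trans hqp) hpq).le,
          div_mul_cancel₀ _ hpq.ne']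
        ring
    _ = _ := by rw [hρ]

end Interpolation

section BallMaximal

variable {X : Type*} [PseudoMetricSpace X] [MeasurableSpace X]

/-- The noncentered maximal function of `f` over a family `S` of balls, a ball being encoded as
the pair of its center and its radius. -/
def ballMaximal (μ : Measure X) (S : Set (X × ℝ)) (f : X → ℝ≥0∞) (x : X) : ℝ≥0∞ :=
  ⨆ b ∈ S, ⨆ (_ : x ∈ ball b.1 b.2), (μ (ball b.1 b.2))⁻¹ * ∫⁻ w in ball b.1 b.2, f w ∂μ

/-- The maximal operator over the family `S` of balls is bounded on `L^p(μ)`. -/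
def HasStrongType (μ : Measure X) (S : Set (X × ℝ)) (p : ℝ) : Prop :=
  ∃ C : ℝ≥0, ∀ f : X → ℝ≥0∞, Measurable f →
    ∫⁻ x, ballMaximal μ S f x ^ p ∂μ ≤ C * ∫⁻ x, f x ^ p ∂μ

/-- The weak type `(q, q)` inequality at level `1`, tested only on functions with values in
`{0} ∪ [1, ∞]`. Rescaling and truncating an arbitrary function at a given height produces such a
function, so this suffices for interpolation with the trivial bound on `L^∞`. -/
def HasTruncatedWeakType (μ : Measure X) (S : Set (X × ℝ)) (q : ℝ) : Prop :=
  ∃ K : ℝ≥0, ∀ h : X → ℝ≥0∞, Measurable h → (∀ x, h x ≠ 0 → 1 ≤ h x) →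
    μ {x | 1 < ballMaximal μ S h x} ≤ K * ∫⁻ x, h x ^ q ∂μ

variable {μ : Measure X} {S T : Set (X × ℝ)} {f : X → ℝ≥0∞}

lemma lt_ballMaximal_iff {a : ℝ≥0∞} {x : X} :
    a < ballMaximal μ S f x ↔ ∃ b ∈ S, x ∈ ball b.1 b.2 ∧
      a < (μ (ball b.1 b.2))⁻¹ * ∫⁻ w in ball b.1 b.2, f w ∂μ := by
  simp only [ballMaximal, lt_iSup_iff, exists_prop]

lemma ballMaximal_le_iff {a : ℝ≥0∞} {x : X} :
    ballMaximal μ S f x ≤ a ↔ ∀ b ∈ S, x ∈ ball b.1 b.2 →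
      (μ (ball b.1 b.2))⁻¹ * ∫⁻ w in ball b.1 b.2, f w ∂μ ≤ a := by
  simp only [ballMaximal, iSup_le_iff]

lemma le_ballMaximal {b : X × ℝ} (hb : b ∈ S) {x : X} (hx : x ∈ ball b.1 b.2) :
    (μ (ball b.1 b.2))⁻¹ * ∫⁻ w in ball b.1 b.2, f w ∂μ ≤ ballMaximal μ S f x :=
  ballMaximal_le_iff.1 le_rfl b hb hx

lemma ballMaximal_union (x : X) :
    ballMaximal μ (S ∪ T) f x = ballMaximal μ S f x ⊔ ballMaximal μ T f x :=
  iSup_union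

lemma measurable_ballMaximal [OpensMeasurableSpace X] : Measurable (ballMaximal μ S f) := by
  refine measurable_of_Ioi fun a => IsOpen.measurableSet (isOpen_iff_forall_mem_open.2 ?_)
  intro x hx
  obtain ⟨b, hb, hxb, hab⟩ := lt_ballMaximal_iff.1 hx
  exact ⟨ball b.1 b.2, fun y hy => lt_ballMaximal_iff.2 ⟨b, hb, hy, hab⟩, isOpen_ball, hxb⟩

lemma HasStrongType.union [OpensMeasurableSpace X] {p : ℝ} (hp : 0 ≤ p)
    (hS : HasStrongType μ S p) (hT : HasStrongType μ T p) : HasStrongType μ (S ∪ T) p := by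
  obtain ⟨C, hC⟩ := hS
  obtain ⟨D, hD⟩ := hT
  refine ⟨C + D, fun f hf => ?_⟩
  calc ∫⁻ x, ballMaximal μ (S ∪ T) f x ^ p ∂μ
      ≤ ∫⁻ x, (ballMaximal μ S f x ^ p + ballMaximal μ T f x ^ p) ∂μ := by
        refine lintegral_mono fun x => ?_
        rw [ballMaximal_union, (ENNReal.monotone_rpow_of_nonneg hp).map_sup]
        exact max_le_add_of_nonneg zero_le zero_le
    _ = ∫⁻ x, ballMaximal μ S f x ^ p ∂μ + ∫⁻ x, ballMaximal μ T f x ^ p ∂μ :=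
        lintegral_add_left (measurable_ballMaximal.pow_const p) _
    _ ≤ (C + D : ℝ≥0) * ∫⁻ x, f x ^ p ∂μ := by
        rw [ENNReal.coe_add, add_mul]
        exact add_le_add (hC f hf) (hD f hf)

lemma ballMaximal_le_mul_ballMaximal_indicator_add {s : ℝ≥0∞} (hs₀ : s ≠ 0) (hs : s ≠ ⊤) (x : X) :
    ballMaximal μ S f x ≤ s * ballMaximal μ S ({x | s < f x}.indicator fun x => f x / s) x + s := by
  set h : X → ℝ≥0∞ := {x | s < f x}.indicator fun x => f x / s
  have hfh (w : X) : f w ≤ s * h w + s := by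
    by_cases hw : s < f w
    · rw [show h w = f w / s from indicator_of_mem hw _, ENNReal.mul_div_cancel hs₀ hs]
      exact le_self_add
    · exact (not_lt.1 hw).trans le_add_self
  refine ballMaximal_le_iff.2 fun b hb hx => ?_
  calc (μ (ball b.1 b.2))⁻¹ * ∫⁻ w in ball b.1 b.2, f w ∂μ
      ≤ (μ (ball b.1 b.2))⁻¹ * ∫⁻ w in ball b.1 b.2, (s * h w + s) ∂μ := by
        gcongr with w
        exact hfh w
    _ = s * ((μ (ball b.1 b.2))⁻¹ * ∫⁻ w in ball b.1 b.2, h w ∂μ)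
          + (μ (ball b.1 b.2))⁻¹ * μ (ball b.1 b.2) * s := by
        rw [lintegral_add_right _ measurable_const, lintegral_const_mul' _ _ hs, setLIntegral_const]
        ring
    _ ≤ s * ballMaximal μ S h x + 1 * s := by
        gcongr
        · exact le_ballMaximal hb hx
        · exact ENNReal.inv_mul_le_one _
    _ = _ := by rw [one_mul]

lemma HasTruncatedWeakType.exists_meas_lt_half_ballMaximal_le {q : ℝ} (hq : 0 < q)
    (hweak : HasTruncatedWeakType μ S q) :
    ∃ K : ℝ≥0, ∀ f : X → ℝ≥0∞, Measurable f → ∀ s : ℝ, 0 < s →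
      ENNReal.ofReal (s ^ q) * μ {x | ENNReal.ofReal s < ballMaximal μ S f x / 2} ≤
        K * ∫⁻ x in {x | ENNReal.ofReal s < f x}, f x ^ q ∂μ := by
  obtain ⟨K, hK⟩ := hweak
  refine ⟨K, fun f hf s hs => ?_⟩
  set t := ENNReal.ofReal s
  have ht₀ : t ≠ 0 := (ENNReal.ofReal_pos.2 hs).ne'
  have ht : t ≠ ⊤ := ENNReal.ofReal_ne_top
  set E : Set X := {x | t < f x}
  have hE : MeasurableSet E := measurableSet_lt measurable_const hf
  set h : X → ℝ≥0∞ := E.indicator fun x => f x / t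
  have hh (x : X) (hx : h x ≠ 0) : 1 ≤ h x := by
    have hxE : t < f x := mem_of_indicator_ne_zero hx
    rw [show h x = f x / t from indicator_of_mem hxE _,
      ENNReal.le_div_iff_mul_le (.inl ht₀) (.inl ht), one_mul]
    exact hxE.le
  have hsub : {x | t < ballMaximal μ S f x / 2} ⊆ {x | 1 < ballMaximal μ S h x} := by
    intro x (hx : t < _)
    by_contra hle
    refine hx.not_ge (ENNReal.div_le_of_le_mul ?_)
    calc ballMaximal μ S f x
        ≤ t * ballMaximal μ S h x + t := ballMaximal_le_mul_ballMaximal_indicator_add ht₀ ht x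
      _ ≤ t * 1 + t := by gcongr; exact not_lt.1 hle
      _ = t * 2 := by ring
  have hint : t ^ q * ∫⁻ x, h x ^ q ∂μ = ∫⁻ x in E, f x ^ q ∂μ := by
    rw [← lintegral_const_mul' _ _ (by finiteness), ← lintegral_indicator hE]
    refine lintegral_congr fun x => ?_
    by_cases hx : x ∈ E
    · rw [indicator_of_mem hx, show h x = f x / t from indicator_of_mem hx _,
        ← ENNReal.mul_rpow_of_nonneg _ _ hq.le, ENNReal.mul_div_cancel ht₀ ht]
    · rw [indicator_of_notMem hx, show h x = 0 from indicator_of_notMem hx _,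
        ENNReal.zero_rpow_of_pos hq, mul_zero]
  rw [← hint, mul_left_comm, ← ENNReal.ofReal_rpow_of_pos hs]
  exact mul_le_mul_right ((measure_mono hsub).trans (hK h ((hf.div_const t).indicator hE) hh)) _

theorem HasTruncatedWeakType.hasStrongType [OpensMeasurableSpace X] [SFinite μ] {p q : ℝ}
    (hq : 0 < q) (hqp : q < p) (hweak : HasTruncatedWeakType μ S q) : HasStrongType μ S p := by
  have hp : 0 < p := hq.trans hqp
  obtain ⟨K, hK⟩ := hweak.exists_meas_lt_half_ballMaximal_le hq
  refine ⟨2 ^ p * (K * (p / (p - q)).toNNReal), fun f hf => ?_⟩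
  have hhalf (x : X) : ballMaximal μ S f x ^ p = 2 ^ p * (ballMaximal μ S f x / 2) ^ p := by
    rw [← ENNReal.mul_rpow_of_nonneg _ _ hp.le, ENNReal.mul_div_cancel two_ne_zero (by simp)]
  simp_rw [hhalf]
  rw [lintegral_const_mul' _ _ (by finiteness), ENNReal.coe_mul, ENNReal.coe_rpow_of_nonneg _ hp.le,
    mul_assoc]
  exact mul_le_mul_right
    (lintegral_rpow_le_of_meas_lt_le (measurable_ballMaximal.div_const 2) hf hq hqp (hK f hf)) _

section Doubling

variable [SecondCountableTopology X] [OpensMeasurableSpace X] {K : ℝ≥0}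

lemma measure_biUnion_ball_le_of_radius_le {R : ℝ} (hpos : ∀ b ∈ T, 0 < b.2)
    (hR : ∀ b ∈ T, b.2 ≤ R)
    (hK : ∀ b ∈ T, μ (closedBall b.1 (5 * b.2)) ≤ K * μ (ball b.1 b.2))
    (hf : ∀ b ∈ T, μ (ball b.1 b.2) ≤ ∫⁻ w in ball b.1 b.2, f w ∂μ) :
    μ (⋃ b ∈ T, ball b.1 b.2) ≤ K * ∫⁻ w, f w ∂μ := by
  obtain ⟨u, huT, hdisj, hcover⟩ :=
    Vitali.exists_disjoint_subfamily_covering_enlargement_closedBall T Prod.fst Prod.snd R hR 5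
      (by norm_num)
  have hdisj' : u.PairwiseDisjoint fun b => ball b.1 b.2 :=
    hdisj.mono fun b => ball_subset_closedBall
  have hu : u.Countable := hdisj'.countable_of_isOpen (fun b _ => isOpen_ball)
    fun b hb => ⟨b.1, mem_ball_self (hpos b (huT hb))⟩
  calc μ (⋃ b ∈ T, ball b.1 b.2)
      ≤ μ (⋃ b ∈ u, closedBall b.1 (5 * b.2)) := by
        refine measure_mono (iUnion₂_subset fun b hb => ?_)
        obtain ⟨c, hc, hbc⟩ := hcover b hb
        exact ball_subset_closedBall.trans (hbc.trans
          (subset_biUnion_of_mem (u := fun c : X × ℝ => closedBall c.1 (5 * c.2)) hc))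
    _ ≤ ∑' b : u, μ (closedBall b.1.1 (5 * b.1.2)) := measure_biUnion_le _ hu _
    _ ≤ ∑' b : u, K * ∫⁻ w in ball b.1.1 b.1.2, f w ∂μ :=
        ENNReal.tsum_le_tsum fun b =>
          (hK _ (huT b.2)).trans (mul_le_mul_right (hf _ (huT b.2)) _)
    _ = K * ∫⁻ w in ⋃ b ∈ u, ball b.1 b.2, f w ∂μ := by
        rw [ENNReal.tsum_mul_left, lintegral_biUnion hu (fun b _ => measurableSet_ball) hdisj']
    _ ≤ K * ∫⁻ w, f w ∂μ := mul_le_mul_right (setLIntegral_le_lintegral _ _) _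

lemma measure_biUnion_ball_le (hpos : ∀ b ∈ T, 0 < b.2)
    (hK : ∀ b ∈ T, μ (closedBall b.1 (5 * b.2)) ≤ K * μ (ball b.1 b.2))
    (hf : ∀ b ∈ T, μ (ball b.1 b.2) ≤ ∫⁻ w in ball b.1 b.2, f w ∂μ) :
    μ (⋃ b ∈ T, ball b.1 b.2) ≤ K * ∫⁻ w, f w ∂μ := by
  let T' (n : ℕ) : Set (X × ℝ) := {b ∈ T | b.2 ≤ n}
  have hmono : Monotone fun n => ⋃ b ∈ T' n, ball b.1 b.2 := fun m n hmn =>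
    biUnion_subset_biUnion_left fun b hb => ⟨hb.1, hb.2.trans (by exact_mod_cast hmn)⟩
  have hexhaust : ⋃ b ∈ T, ball b.1 b.2 ⊆ ⋃ n, ⋃ b ∈ T' n, ball b.1 b.2 := by
    refine iUnion₂_subset fun b hb => ?_
    obtain ⟨n, hn⟩ := exists_nat_ge b.2
    exact (subset_biUnion_of_mem (u := fun b : X × ℝ => ball b.1 b.2)
      (show b ∈ T' n from ⟨hb, hn⟩)).trans (subset_iUnion (fun n => ⋃ b ∈ T' n, ball b.1 b.2) n)
  calc μ (⋃ b ∈ T, ball b.1 b.2)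
      ≤ ⨆ n, μ (⋃ b ∈ T' n, ball b.1 b.2) :=
        (measure_mono hexhaust).trans hmono.measure_iUnion.le
    _ ≤ K * ∫⁻ w, f w ∂μ := iSup_le fun n =>
        measure_biUnion_ball_le_of_radius_le (fun b hb => hpos b hb.1) (fun b hb => hb.2)
          (fun b hb => hK b hb.1) fun b hb => hf b hb.1

lemma measure_one_lt_ballMaximal_le (hpos : ∀ b ∈ S, 0 < b.2)
    (hK : ∀ b ∈ S, μ (closedBall b.1 (5 * b.2)) ≤ K * μ (ball b.1 b.2)) :
    μ {x | 1 < ballMaximal μ S f x} ≤ K * ∫⁻ x, f x ∂μ := by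
  let T : Set (X × ℝ) := {b ∈ S | μ (ball b.1 b.2) ≤ ∫⁻ w in ball b.1 b.2, f w ∂μ}
  have hsub : {x | 1 < ballMaximal μ S f x} ⊆ ⋃ b ∈ T, ball b.1 b.2 := by
    intro x hx
    obtain ⟨b, hb, hxb, hlt⟩ := lt_ballMaximal_iff.1 hx
    refine mem_biUnion (show b ∈ T from ⟨hb, ?_⟩) hxb
    by_contra! hint
    exact hlt.not_ge ((mul_le_mul_right hint.le _).trans (ENNReal.inv_mul_le_one _))
  exact (measure_mono hsub).trans
    (measure_biUnion_ball_le (fun b hb => hpos b hb.1) (fun b hb => hK b hb.1) fun b hb => hb.2)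

theorem hasStrongType_of_doubling [SFinite μ] (hpos : ∀ b ∈ S, 0 < b.2)
    (hK : ∀ b ∈ S, μ (closedBall b.1 (5 * b.2)) ≤ K * μ (ball b.1 b.2)) {p : ℝ} (hp : 1 < p) :
    HasStrongType μ S p := by
  have hweak : HasTruncatedWeakType μ S 1 := ⟨K, fun h _ _ => by
    simpa only [ENNReal.rpow_one] using measure_one_lt_ballMaximal_le hpos hK⟩
  exact hweak.hasStrongType one_pos hp

end Doubling

lemma measurable_ballMaximal_slice {Y : Type*} [MeasurableSpace Y] [OpensMeasurableSpace X]
    [SFinite μ] (hS : S.Countable) {g : X × Y → ℝ≥0∞} (hg : Measurable g) :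
    Measurable fun z : X × Y => ballMaximal μ S (fun x => g (x, z.2)) z.1 := by
  refine Measurable.biSup _ hS fun b _ => ?_
  have hind : (fun z : X × Y => ⨆ _ : z.1 ∈ ball b.1 b.2,
      (μ (ball b.1 b.2))⁻¹ * ∫⁻ w in ball b.1 b.2, g (w, z.2) ∂μ) =
      (Prod.fst ⁻¹' ball b.1 b.2).indicator
        fun z => (μ (ball b.1 b.2))⁻¹ * ∫⁻ w in ball b.1 b.2, g (w, z.2) ∂μ := by
    ext z
    by_cases hz : z.1 ∈ ball b.1 b.2 <;> simp [indicator, hz]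
  rw [hind]
  exact ((hg.lintegral_prod_left'.comp measurable_snd).const_mul _).indicator
    (measurableSet_ball.preimage measurable_fst)

theorem HasStrongType.exists_lintegral_slice_le {Y : Type*} [MeasurableSpace Y]
    [OpensMeasurableSpace X] [SFinite μ] {p : ℝ} (h : HasStrongType μ S p) (hS : S.Countable)
    (ν : Measure Y) [SFinite ν] :
    ∃ C : ℝ≥0, ∀ g : X × Y → ℝ≥0∞, Measurable g →
      ∫⁻ x, ∫⁻ y, ballMaximal μ S (fun x' => g (x', y)) x ^ p ∂ν ∂μ ≤
        C * ∫⁻ z, g z ^ p ∂μ.prod ν := by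
  obtain ⟨C, hC⟩ := h
  refine ⟨C, fun g hg => ?_⟩
  calc ∫⁻ x, ∫⁻ y, ballMaximal μ S (fun x' => g (x', y)) x ^ p ∂ν ∂μ
      = ∫⁻ y, ∫⁻ x, ballMaximal μ S (fun x' => g (x', y)) x ^ p ∂μ ∂ν :=
        lintegral_lintegral_swap
          ((measurable_ballMaximal_slice hS hg).pow_const p).aemeasurable
    _ ≤ ∫⁻ y, C * ∫⁻ x, g (x, y) ^ p ∂μ ∂ν :=
        lintegral_mono fun y => hC _ (hg.comp measurable_prodMk_right)
    _ = C * ∫⁻ z, g z ^ p ∂μ.prod ν := by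
        rw [lintegral_const_mul' _ _ ENNReal.coe_ne_top,
          lintegral_prod_symm' _ (hg.pow_const p)]

end BallMaximal

section RationalIntervals

/-- The open intervals with rational center and rational radius; being countable, they give a
maximal function that depends measurably on parameters. -/
def rationalIntervals : Set (ℝ × ℝ) :=
  {b | 0 < b.2} ∩ range fun b : ℚ × ℚ => ((b.1 : ℝ), (b.2 : ℝ))

lemma countable_rationalIntervals : rationalIntervals.Countable :=
  (countable_range _).mono inter_subset_right

lemma hasStrongType_rationalIntervals {p : ℝ} (hp : 1 < p) :
    HasStrongType volume rationalIntervals p := by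
  refine hasStrongType_of_doubling (K := 5) (fun b hb => hb.1) (fun b _ => ?_) hp
  rw [Real.volume_ball, Real.volume_closedBall, mul_left_comm,
    ENNReal.ofReal_mul (by norm_num)]
  norm_num

lemma setLIntegral_ball_le_mul_ballMaximal_rationalIntervals (g : ℝ → ℝ≥0∞) (x : ℝ) {r : ℝ}
    (hr : 0 < r) :
    ∫⁻ w in ball x r, g w ≤
      ENNReal.ofReal (4 * r) * ballMaximal volume rationalIntervals g x := by
  obtain ⟨c, hxc, hc⟩ := exists_rat_btwn (show x < x + r / 2 by linarith)
  obtain ⟨ρ, hrρ, hρ⟩ := exists_rat_btwn (show 3 * r / 2 < 2 * r by linarith)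
  have hρ₀ : (0 : ℝ) < ρ := by linarith
  have hdist : dist x c < r / 2 := by
    rw [dist_comm, Real.dist_eq, abs_of_pos] <;> linarith
  have havg := le_ballMaximal (μ := volume) (f := g) (b := ((c : ℝ), (ρ : ℝ)))
    (show _ ∈ rationalIntervals from ⟨hρ₀, (c, ρ), rfl⟩) (mem_ball.2 (by linarith) : x ∈ _)
  rw [Real.volume_ball, ENNReal.inv_mul_le_iff (by simpa using hρ₀) ENNReal.ofReal_ne_top] at havg
  calc ∫⁻ w in ball x r, g w
      ≤ ∫⁻ w in ball (c : ℝ) ρ, g w := lintegral_mono_set (ball_subset_ball' (by linarith))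
    _ ≤ ENNReal.ofReal (2 * ρ) * ballMaximal volume rationalIntervals g x := havg
    _ ≤ _ := by gcongr ENNReal.ofReal ?_ * _; linarith

end RationalIntervals

section HeightMeasure

/-- The measure `dy / y ^ 2` on the positive half-line. In the coordinates `(Re z, Im z)` the
measure `hypMeasure` is the product of Lebesgue measure and this measure. -/
def heightMeasure : Measure ℝ :=
  (volume.restrict (Ioi 0)).withDensity fun y => ENNReal.ofReal (1 / y ^ 2)

instance : SigmaFinite heightMeasure := SigmaFinite.withDensity_ofReal _

lemma ae_heightMeasure_pos : ∀ᵐ y ∂heightMeasure, 0 < y :=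
  (withDensity_absolutelyContinuous _ _).ae_le (ae_restrict_mem measurableSet_Ioi)

lemma setLIntegral_heightMeasure_rpow {T : Set ℝ} (hT : MeasurableSet T) (s : ℝ) :
    ∫⁻ y in T, ENNReal.ofReal y ^ s ∂heightMeasure =
      ∫⁻ y in T ∩ Ioi 0, ENNReal.ofReal (y ^ (s - 1 - 1)) := by
  rw [heightMeasure, restrict_withDensity hT, Measure.restrict_restrict hT,
    lintegral_withDensity_eq_lintegral_mul _ (by fun_prop) (by fun_prop)]
  refine setLIntegral_congr_fun (hT.inter measurableSet_Ioi) fun y hy => ?_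
  have hy₀ : 0 < y := hy.2
  rw [Pi.mul_apply, ENNReal.ofReal_rpow_of_pos hy₀, ← ENNReal.ofReal_mul (by positivity),
    sub_sub, Real.rpow_sub hy₀, one_add_one_eq_two, Real.rpow_two, div_mul_eq_mul_div, one_mul]

lemma setLIntegral_heightMeasure_Iic_rpow {s t : ℝ} (hs : 1 < s) (ht : 0 < t) :
    ∫⁻ y in Iic t, ENNReal.ofReal y ^ s ∂heightMeasure =
      ENNReal.ofReal (t ^ (s - 1) / (s - 1)) := by
  rw [setLIntegral_heightMeasure_rpow measurableSet_Iic, inter_comm, Ioi_inter_Iic,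
    lintegral_Ioc_ofReal_rpow (sub_pos.2 hs) ht.le]

lemma setLIntegral_heightMeasure_Ioi_rpow {s t : ℝ} (hs : s < 1) (ht : 0 < t) :
    ∫⁻ y in Ioi t, ENNReal.ofReal y ^ s ∂heightMeasure =
      ENNReal.ofReal (t ^ (s - 1) / (1 - s)) := by
  rw [setLIntegral_heightMeasure_rpow measurableSet_Ioi, Ioi_inter_Ioi, sup_eq_left.2 ht.le,
    lintegral_Ioi_ofReal_rpow (sub_neg.2 hs) ht, neg_div, ← div_neg, neg_sub]

lemma heightMeasure_Ioi {t : ℝ} (ht : 0 < t) : heightMeasure (Ioi t) = ENNReal.ofReal (1 / t) := by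
  simpa [Real.rpow_neg_one] using setLIntegral_heightMeasure_Ioi_rpow zero_lt_one ht

lemma heightMeasure_Ioc {s t : ℝ} (hs : 0 < s) (hst : s ≤ t) :
    heightMeasure (Ioc s t) = ENNReal.ofReal (1 / s - 1 / t) := by
  have ht : 0 < t := hs.trans_le hst
  have hfin : heightMeasure (Ioi t) ≠ ⊤ := by
    rw [heightMeasure_Ioi ht]
    exact ENNReal.ofReal_ne_top
  rw [← Ioi_sdiff_Ioi, measure_sdiff (Ioi_subset_Ioi hst) nullMeasurableSet_Ioi hfin,
    heightMeasure_Ioi hs, heightMeasure_Ioi ht, ENNReal.ofReal_sub _ (by positivity)]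

lemma heightMeasure_one_lt_sqrt_mul_le (G : ℝ≥0∞) :
    heightMeasure {y | 1 < ENNReal.ofReal y ^ (1 / 2 : ℝ) * G} ≤ G ^ 2 := by
  obtain rfl | hG₀ := eq_or_ne G 0
  · simp
  obtain rfl | hG := eq_or_ne G ⊤
  · simp
  lift G to ℝ≥0 using hG
  have hG_pos : (0 : ℝ) < G := by
    exact_mod_cast pos_iff_ne_zero.2 (by exact_mod_cast hG₀ : G ≠ 0)
  have hsub : {y | 1 < ENNReal.ofReal y ^ (1 / 2 : ℝ) * G} ⊆ Ioi (1 / (G : ℝ) ^ 2) := by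
    intro y (hy : 1 < ENNReal.ofReal y ^ (1 / 2 : ℝ) * G)
    have hsq : (ENNReal.ofReal y ^ (1 / 2 : ℝ) * G) ^ 2 = ENNReal.ofReal (y * G ^ 2) := by
      rw [mul_pow, ← ENNReal.rpow_mul_natCast, ENNReal.ofReal_mul' (by positivity),
        ENNReal.ofReal_pow hG_pos.le, ENNReal.ofReal_coe_nnreal]
      norm_num
    have hlt : 1 < ENNReal.ofReal (y * G ^ 2) := hsq ▸ one_lt_pow₀ hy two_ne_zero
    exact (div_lt_iff₀ (by positivity)).2 (ENNReal.one_lt_ofReal.1 hlt)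
  calc heightMeasure {y | 1 < ENNReal.ofReal y ^ (1 / 2 : ℝ) * G}
      ≤ heightMeasure (Ioi (1 / (G : ℝ) ^ 2)) := measure_mono hsub
    _ = G ^ 2 := by
        rw [heightMeasure_Ioi (by positivity), one_div_one_div, ENNReal.ofReal_pow hG_pos.le,
          ENNReal.ofReal_coe_nnreal]

lemma lintegral_mul_le_of_lintegral_rpow_le {X : Type*} [MeasurableSpace X] {μ : Measure X}
    {w F : X → ℝ≥0∞} (hw : AEMeasurable w μ) (hF : AEMeasurable F μ) {r r' : ℝ}
    (hr : r'.HolderConjugate r) {S k : ℝ≥0∞} (hS₀ : S ≠ 0) (hS : S ≠ ⊤)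
    (hwS : ∫⁻ x, w x ^ r' ∂μ ≤ k * S ^ (1 - r' / 2)) (hFS : ∫⁻ x, F x ^ r ∂μ ≤ S) :
    ∫⁻ x, w x * F x ∂μ ≤ k ^ (1 / r') * S ^ (1 / 2 : ℝ) := by
  have hr'_nonneg : 0 ≤ 1 / r' := (one_div_pos.2 hr.pos).le
  have hr_nonneg : 0 ≤ 1 / r := (one_div_pos.2 hr.symm.pos).le
  have hexp : (1 - r' / 2) * (1 / r') + 1 / r = 1 / 2 := by
    linear_combination hr.inv_add_inv_eq_one - 1 / 2 * mul_inv_cancel₀ hr.ne_zero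
  calc ∫⁻ x, w x * F x ∂μ
      ≤ (∫⁻ x, w x ^ r' ∂μ) ^ (1 / r') * (∫⁻ x, F x ^ r ∂μ) ^ (1 / r) :=
        ENNReal.lintegral_mul_le_Lp_mul_Lq μ hr hw hF
    _ ≤ (k * S ^ (1 - r' / 2)) ^ (1 / r') * S ^ (1 / r) := by gcongr
    _ = k ^ (1 / r') * S ^ (1 / 2 : ℝ) := by
        rw [ENNReal.mul_rpow_of_nonneg _ _ hr'_nonneg, ← ENNReal.rpow_mul, mul_assoc,
          ← ENNReal.rpow_add _ _ hS₀ hS, hexp]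

lemma exists_setLIntegral_sqrt_mul_le {r r' c : ℝ} (hr : r'.HolderConjugate r) {T : ℝ → Set ℝ}
    (hT : ∀ t, 0 < t → ∫⁻ y in T t, ENNReal.ofReal y ^ (r' / 2) ∂heightMeasure =
      ENNReal.ofReal (t ^ (r' / 2 - 1) / c)) :
    ∃ C : ℝ≥0, ∀ F : ℝ → ℝ≥0∞, Measurable F → ∀ S : ℝ, 0 < S →
      ∫⁻ y, F y ^ r ∂heightMeasure ≤ ENNReal.ofReal S →
      ∫⁻ y in T S⁻¹, ENNReal.ofReal y ^ (1 / 2 : ℝ) * F y ∂heightMeasure ≤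
        C * ENNReal.ofReal S ^ (1 / 2 : ℝ) := by
  refine ⟨c⁻¹.toNNReal ^ (1 / r'), fun F hF S hS hFS => ?_⟩
  have hw : ∫⁻ y in T S⁻¹, (ENNReal.ofReal y ^ (1 / 2 : ℝ)) ^ r' ∂heightMeasure ≤
      c⁻¹.toNNReal * ENNReal.ofReal S ^ (1 - r' / 2) := by
    simp_rw [← ENNReal.rpow_mul, one_div_mul_eq_div]
    rw [hT _ (inv_pos.2 hS), Real.inv_rpow hS.le, ← Real.rpow_neg hS.le, neg_sub, div_eq_inv_mul,
      ENNReal.ofReal_mul' (by positivity), ENNReal.ofReal_rpow_of_pos hS]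
    exact le_rfl
  rw [ENNReal.coe_rpow_of_nonneg _ (one_div_pos.2 hr.pos).le]
  exact lintegral_mul_le_of_lintegral_rpow_le (by fun_prop) hF.aemeasurable hr
    (ENNReal.ofReal_pos.2 hS).ne' ENNReal.ofReal_ne_top hw
    ((setLIntegral_le_lintegral _ _).trans hFS)

-- Splitting at the height `1 / S`, where `S` is the sum on the right-hand side, makes the Hölder
-- bounds below (exponent `a`) and above (exponent `q`) that height both of order `S ^ (1 / 2)`.
lemma exists_sq_lintegral_sqrt_mul_le {a q : ℝ} (ha₁ : 1 < a) (ha₂ : a < 2) (hq : 2 < q) :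
    ∃ C : ℝ≥0, ∀ F : ℝ → ℝ≥0∞, Measurable F →
      (∫⁻ y, ENNReal.ofReal y ^ (1 / 2 : ℝ) * F y ∂heightMeasure) ^ 2 ≤
        C * (∫⁻ y, F y ^ a ∂heightMeasure + ∫⁻ y, F y ^ q ∂heightMeasure) := by
  have ha' : 1 < a.conjExponent / 2 := by
    rw [Real.conjExponent, lt_div_iff₀ two_pos, lt_div_iff₀ (by linarith)]
    linarith
  have hq' : q.conjExponent / 2 < 1 := by
    rw [Real.conjExponent, div_lt_iff₀ two_pos, div_lt_iff₀ (by linarith)]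
    linarith
  obtain ⟨C₁, hC₁⟩ := exists_setLIntegral_sqrt_mul_le (.symm (.conjExponent ha₁))
    fun _ ht => setLIntegral_heightMeasure_Iic_rpow ha' ht
  obtain ⟨C₂, hC₂⟩ := exists_setLIntegral_sqrt_mul_le (.symm (.conjExponent (by linarith)))
    fun _ ht => setLIntegral_heightMeasure_Ioi_rpow hq' ht
  refine ⟨(C₁ + C₂ + 1) ^ 2, fun F hF => ?_⟩
  set A := ∫⁻ y, F y ^ a ∂heightMeasure
  set B := ∫⁻ y, F y ^ q ∂heightMeasure
  obtain hS | hS := eq_or_ne (A + B) ⊤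
  · rw [hS, ENNReal.mul_top (by positivity)]
    exact le_top
  obtain hS₀ | hS₀ := eq_or_ne (A + B) 0
  · have hA : A = 0 := le_antisymm (le_self_add.trans_eq hS₀) zero_le
    have hzero : ∫⁻ y, F y * ENNReal.ofReal y ^ (1 / 2 : ℝ) ∂heightMeasure = 0 :=
      ENNReal.lintegral_mul_eq_zero_of_lintegral_rpow_eq_zero (by linarith) hF.aemeasurable hA
    simp_rw [mul_comm (ENNReal.ofReal _ ^ (1 / 2 : ℝ)), hzero]
    simp
  have hpos : 0 < (A + B).toReal := ENNReal.toReal_pos hS₀ hS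
  have hlow := hC₁ F hF _ hpos (by rw [ENNReal.ofReal_toReal hS]; exact le_self_add)
  have hhigh := hC₂ F hF _ hpos (by rw [ENNReal.ofReal_toReal hS]; exact le_add_self)
  rw [ENNReal.ofReal_toReal hS] at hlow hhigh
  calc (∫⁻ y, ENNReal.ofReal y ^ (1 / 2 : ℝ) * F y ∂heightMeasure) ^ 2
      ≤ (C₁ * (A + B) ^ (1 / 2 : ℝ) + C₂ * (A + B) ^ (1 / 2 : ℝ)) ^ 2 := by
        rw [← lintegral_add_compl _ (measurableSet_Iic (a := (A + B).toReal⁻¹)), compl_Iic]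
        gcongr
    _ = (C₁ + C₂ : ℝ≥0) ^ 2 * (A + B) := by
        rw [← add_mul, mul_pow, ← ENNReal.rpow_mul_natCast, ENNReal.coe_add]
        norm_num
    _ ≤ _ := by
        rw [ENNReal.coe_pow]
        gcongr ?_ ^ 2 * _
        exact ENNReal.coe_le_coe.2 le_self_add

end HeightMeasure

section HypMeasure

lemma measurableEmbedding_re_im : MeasurableEmbedding fun z : ℍ => (z.re, z.im) :=
  Complex.measurableEquivRealProd.measurableEmbedding.comp
    UpperHalfPlane.isOpenEmbedding_coe.measurableEmbedding

theorem measurePreserving_re_im :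
    MeasurePreserving (fun z : ℍ => (z.re, z.im)) hypMeasure (volume.prod heightMeasure) := by
  have hcoe : MeasurableEmbedding ((↑) : ℍ → ℂ) :=
    UpperHalfPlane.isOpenEmbedding_coe.measurableEmbedding
  have hrange : range ((↑) : ℍ → ℂ) = Complex.measurableEquivRealProd ⁻¹' (univ ×ˢ Ioi 0) := by
    ext w
    simp [UpperHalfPlane.range_coe]
  have hvol : MeasurePreserving (fun z : ℍ => (z.re, z.im))
      (.comap ((↑) : ℍ → ℂ) volume) ((volume.prod volume).restrict (univ ×ˢ Ioi 0)) := by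
    refine .comp (g := Complex.measurableEquivRealProd) ?_
      ⟨hcoe.measurable, hcoe.map_comap volume⟩
    rw [hrange]
    exact Complex.volume_preserving_equiv_real_prod.restrict_preimage
      (MeasurableSet.univ.prod measurableSet_Ioi)
  have hprod : (volume : Measure ℝ).prod heightMeasure =
      ((volume.prod volume).restrict (univ ×ˢ Ioi 0)).withDensity
        fun w => ENNReal.ofReal (1 / w.2 ^ 2) := by
    rw [heightMeasure, prod_withDensity_right (by fun_prop), ← Measure.prod_restrict,
      Measure.restrict_univ]
  refine ⟨measurableEmbedding_re_im.measurable, Measure.ext fun A hA => ?_⟩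
  rw [hprod, Measure.map_apply measurableEmbedding_re_im.measurable hA, withDensity_apply _ hA,
    hypMeasure, withDensity_apply _ (measurableEmbedding_re_im.measurable hA)]
  exact hvol.setLIntegral_comp_preimage hA
    (f := fun w : ℝ × ℝ => ENNReal.ofReal (1 / w.2 ^ 2)) (by fun_prop)

instance : SigmaFinite hypMeasure := measurePreserving_re_im.sigmaFinite

lemma sinh_le_mul_exp (r : ℝ) : Real.sinh r ≤ r * Real.exp r := by
  have hexp : (1 - 2 * r) * Real.exp r ≤ Real.exp (-r) := by
    calc (1 - 2 * r) * Real.exp r ≤ Real.exp (-(2 * r)) * Real.exp r := by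
          gcongr; linarith [Real.add_one_le_exp (-(2 * r))]
      _ = Real.exp (-r) := by rw [← Real.exp_add]; ring_nf
  rw [Real.sinh_eq]
  linarith

lemma hypMeasure_closedBall_le (c : ℍ) {r : ℝ} (hr : 0 ≤ r) :
    hypMeasure (closedBall c r) ≤
      ENNReal.ofReal ((Real.exp r * Real.sinh r) ^ 2) * NNReal.pi := by
  have hc : 0 < c.im := c.im_pos
  have : 0 ≤ Real.sinh r := Real.sinh_nonneg_iff.2 hr
  rw [hypMeasure, withDensity_apply _ measurableSet_closedBall]
  calc ∫⁻ z in closedBall c r, ENNReal.ofReal (1 / z.im ^ 2) ∂.comap ((↑) : ℍ → ℂ) volume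
      ≤ ∫⁻ z in closedBall c r, ENNReal.ofReal ((Real.exp r / c.im) ^ 2)
          ∂.comap ((↑) : ℍ → ℂ) volume := by
        refine setLIntegral_mono' measurableSet_closedBall fun z hz => ENNReal.ofReal_le_ofReal ?_
        have him : c.im ≤ z.im * Real.exp r := (im_le_im_mul_exp_dist c z).trans
          (mul_le_mul_of_nonneg_left (Real.exp_le_exp.2 (mem_closedBall'.1 hz)) z.im_pos.le)
        rw [← one_div_pow]
        have := z.im_pos
        gcongr ?_ ^ 2
        rwa [div_le_div_iff₀ z.im_pos hc, one_mul, mul_comm]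
    _ = _ := by
        rw [setLIntegral_const, UpperHalfPlane.isOpenEmbedding_coe.measurableEmbedding.comap_apply,
          image_coe_closedBall, Complex.volume_closedBall, ← mul_assoc,
          ← ENNReal.ofReal_pow (by positivity), ← ENNReal.ofReal_mul (by positivity), ← mul_pow]
        congr 3
        field_simp

lemma le_hypMeasure_ball (c : ℍ) {r : ℝ} (hr : 0 ≤ r) :
    ENNReal.ofReal ((Real.exp (-r) * Real.sinh r) ^ 2) * NNReal.pi ≤ hypMeasure (ball c r) := by
  have hc : 0 < c.im := c.im_pos
  have : 0 ≤ Real.sinh r := Real.sinh_nonneg_iff.2 hr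
  rw [hypMeasure, withDensity_apply _ measurableSet_ball]
  calc ENNReal.ofReal ((Real.exp (-r) * Real.sinh r) ^ 2) * NNReal.pi
      = ∫⁻ z in ball c r, ENNReal.ofReal ((Real.exp (-r) / c.im) ^ 2)
          ∂.comap ((↑) : ℍ → ℂ) volume := by
        rw [setLIntegral_const, UpperHalfPlane.isOpenEmbedding_coe.measurableEmbedding.comap_apply,
          image_coe_ball, Complex.volume_ball, ← mul_assoc,
          ← ENNReal.ofReal_pow (by positivity), ← ENNReal.ofReal_mul (by positivity), ← mul_pow]
        congr 3
        field_simp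
    _ ≤ ∫⁻ z in ball c r, ENNReal.ofReal (1 / z.im ^ 2) ∂.comap ((↑) : ℍ → ℂ) volume := by
        refine setLIntegral_mono' measurableSet_ball fun z hz => ENNReal.ofReal_le_ofReal ?_
        have him : z.im ≤ c.im * Real.exp r := (im_le_im_mul_exp_dist z c).trans
          (mul_le_mul_of_nonneg_left (Real.exp_le_exp.2 (mem_ball.1 hz).le) hc.le)
        rw [← one_div_pow]
        have := z.im_pos
        gcongr ?_ ^ 2
        rwa [div_le_div_iff₀ hc z.im_pos, one_mul, Real.exp_neg,
          inv_mul_le_iff₀ (Real.exp_pos r), mul_comm]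

lemma hypMeasure_closedBall_five_mul_le (c : ℍ) {r : ℝ} (hr₀ : 0 ≤ r) (hr₂ : r ≤ 2) :
    hypMeasure (closedBall c (5 * r)) ≤
      ENNReal.ofReal ((5 * Real.exp 22) ^ 2) * hypMeasure (ball c r) := by
  have hradius : Real.exp (5 * r) * Real.sinh (5 * r) ≤
      5 * Real.exp 22 * (Real.exp (-r) * Real.sinh r) := by
    calc Real.exp (5 * r) * Real.sinh (5 * r)
        ≤ Real.exp (5 * r) * (5 * r * Real.exp (5 * r)) := by
          gcongr; exact sinh_le_mul_exp _
      _ = 5 * Real.exp (11 * r) * (Real.exp (-r) * r) := by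
          rw [show 11 * r = 5 * r + 5 * r + r by ring, Real.exp_add, Real.exp_add, Real.exp_neg]
          field_simp
      _ ≤ 5 * Real.exp 22 * (Real.exp (-r) * Real.sinh r) := by
          gcongr
          · linarith
          · exact Real.self_le_sinh_iff.2 hr₀
  have : 0 ≤ Real.sinh (5 * r) := Real.sinh_nonneg_iff.2 (by positivity)
  calc hypMeasure (closedBall c (5 * r))
      ≤ ENNReal.ofReal ((Real.exp (5 * r) * Real.sinh (5 * r)) ^ 2) * NNReal.pi :=
        hypMeasure_closedBall_le c (by positivity)
    _ ≤ ENNReal.ofReal ((5 * Real.exp 22 * (Real.exp (-r) * Real.sinh r)) ^ 2) * NNReal.pi := by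
        gcongr
    _ = ENNReal.ofReal ((5 * Real.exp 22) ^ 2) *
          (ENNReal.ofReal ((Real.exp (-r) * Real.sinh r) ^ 2) * NNReal.pi) := by
        rw [mul_pow, ENNReal.ofReal_mul (by positivity), mul_assoc]
    _ ≤ _ := by gcongr; exact le_hypMeasure_ball c hr₀

theorem hasStrongType_hypMeasure_radius_le_two {p : ℝ} (hp : 1 < p) :
    HasStrongType hypMeasure {b | 0 < b.2 ∧ b.2 ≤ 2} p :=
  hasStrongType_of_doubling (fun _ hb => hb.1)
    (fun b hb => hypMeasure_closedBall_five_mul_le b.1 hb.1.le hb.2) hp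

lemma mem_ball_of_im_mul_exp_mem {c z : ℍ} {r : ℝ} (hr : 2 < r)
    (hre : dist z.re c.re < c.im / 2) (him : z.im * Real.exp r ∈ Ioc (2 * c.im) (4 * c.im)) :
    z ∈ ball c r := by
  have hc : 0 < c.im := c.im_pos
  have hz : 0 < z.im := z.im_pos
  have hexp : 5 < Real.exp r := by
    nlinarith [Real.quadratic_le_exp_of_nonneg (show 0 ≤ r by linarith)]
  have hcosh : Real.exp r < 2 * Real.cosh r := by
    linarith [Real.cosh_eq r, Real.exp_pos (-r)]
  have hre_sq : (z.re - c.re) ^ 2 < (c.im / 2) ^ 2 := sq_lt_sq' (abs_lt.1 hre).1 (abs_lt.1 hre).2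
  have him_le : z.im * 5 ≤ 4 * c.im := (mul_le_mul_of_nonneg_left hexp.le hz.le).trans him.2
  rw [mem_ball, ← abs_of_nonneg (dist_nonneg (x := z) (y := c)),
    ← abs_of_pos (show 0 < r by linarith), ← Real.cosh_lt_cosh, cosh_dist',
    div_lt_iff₀ (by positivity)]
  calc (z.re - c.re) ^ 2 + z.im ^ 2 + c.im ^ 2
      < 2 * c.im * c.im := by nlinarith
    _ < z.im * Real.exp r * c.im := mul_lt_mul_of_pos_right him.1 hc
    _ < z.im * (2 * Real.cosh r) * c.im := by gcongr
    _ = Real.cosh r * (2 * z.im * c.im) := by ring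

lemma exp_div_four_le_hypMeasure_ball (c : ℍ) {r : ℝ} (hr : 2 < r) :
    ENNReal.ofReal (Real.exp r / 4) ≤ hypMeasure (ball c r) := by
  have : 0 < c.im := c.im_pos
  set Q : Set (ℝ × ℝ) :=
    ball c.re (c.im / 2) ×ˢ Ioc (2 * c.im / Real.exp r) (4 * c.im / Real.exp r)
  have hQ : MeasurableSet Q := measurableSet_ball.prod measurableSet_Ioc
  calc ENNReal.ofReal (Real.exp r / 4)
      = (volume.prod heightMeasure) Q := by
        rw [Measure.prod_prod, Real.volume_ball,
          heightMeasure_Ioc (by positivity) (by gcongr; norm_num),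
          ← ENNReal.ofReal_mul (by positivity)]
        congr 1
        field_simp
        norm_num
    _ = hypMeasure ((fun z : ℍ => (z.re, z.im)) ⁻¹' Q) :=
        (measurePreserving_re_im.measure_preimage hQ.nullMeasurableSet).symm
    _ ≤ hypMeasure (ball c r) := by
        refine measure_mono fun z hz => mem_ball_of_im_mul_exp_mem hr hz.1 ⟨?_, ?_⟩
        · exact (div_lt_iff₀ (Real.exp_pos r)).1 hz.2.1
        · exact (le_div_iff₀ (Real.exp_pos r)).1 hz.2.2

/-- The superposition of the one-dimensional maximal functions of the horizontal slices
`x ↦ g (x, y)`, weighted by `√y`; it controls the averages over large hyperbolic balls. -/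
def horizontalMaximal (g : ℝ × ℝ → ℝ≥0∞) (x : ℝ) : ℝ≥0∞ :=
  ∫⁻ y, ENNReal.ofReal y ^ (1 / 2 : ℝ) *
    ballMaximal volume rationalIntervals (fun x' => g (x', y)) x ∂heightMeasure

lemma measurable_horizontalMaximal {g : ℝ × ℝ → ℝ≥0∞} (hg : Measurable g) :
    Measurable (horizontalMaximal g) :=
  Measurable.lintegral_prod_right' (f := fun w : ℝ × ℝ => ENNReal.ofReal w.2 ^ (1 / 2 : ℝ) *
      ballMaximal volume rationalIntervals (fun x' => g (x', w.2)) w.1)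
    (.mul (by fun_prop) (measurable_ballMaximal_slice countable_rationalIntervals hg))

lemma re_mem_ball_of_dist_lt {z w : ℍ} {r : ℝ} (h : dist z w < 2 * r) :
    w.re ∈ ball z.re (Real.exp r * √(z.im * w.im)) := by
  have : 0 < √(z.im * w.im) := Real.sqrt_pos.2 (mul_pos z.im_pos w.im_pos)
  have hsinh : Real.sinh (dist z w / 2) < Real.exp r / 2 :=
    calc Real.sinh (dist z w / 2) < Real.sinh r := Real.sinh_lt_sinh.2 (by linarith)
      _ < Real.exp r / 2 := by linarith [Real.sinh_eq r, Real.exp_pos (-r)]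
  rw [sinh_half_dist, div_lt_iff₀ (by positivity)] at hsinh
  calc dist w.re z.re ≤ dist (w : ℂ) z := by
        rw [Real.dist_eq, Complex.dist_eq]
        exact Complex.abs_re_le_norm ((w : ℂ) - z)
    _ = dist (z : ℂ) w := dist_comm _ _
    _ < Real.exp r / 2 * (2 * √(z.im * w.im)) := hsinh
    _ = Real.exp r * √(z.im * w.im) := by ring

lemma setLIntegral_ball_hypMeasure_le {g : ℝ × ℝ → ℝ≥0∞} (hg : Measurable g) {c z : ℍ} {r : ℝ}
    (hz : z ∈ ball c r) :
    ∫⁻ w in ball c r, g (w.re, w.im) ∂hypMeasure ≤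
      ∫⁻ y, (∫⁻ x in ball z.re (Real.exp r * √(z.im * y)), g (x, y)) ∂heightMeasure := by
  set Q : Set (ℝ × ℝ) := {w | w.1 ∈ ball z.re (Real.exp r * √(z.im * w.2))}
  have hQ : MeasurableSet Q :=
    measurableSet_lt (f := fun w : ℝ × ℝ => dist w.1 z.re) (by fun_prop) (by fun_prop)
  have hsub : ball c r ⊆ (fun w : ℍ => (w.re, w.im)) ⁻¹' Q := fun w hw =>
    re_mem_ball_of_dist_lt <| calc
      dist z w ≤ dist z c + dist w c := dist_triangle_right _ _ _
      _ < 2 * r := by linarith [mem_ball.1 hz, mem_ball.1 hw]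
  calc ∫⁻ w in ball c r, g (w.re, w.im) ∂hypMeasure
      ≤ ∫⁻ w in (fun w : ℍ => (w.re, w.im)) ⁻¹' Q, g (w.re, w.im) ∂hypMeasure :=
        lintegral_mono_set hsub
    _ = ∫⁻ w in Q, g w ∂volume.prod heightMeasure :=
        measurePreserving_re_im.setLIntegral_comp_preimage hQ hg
    _ = ∫⁻ y, (∫⁻ x, Q.indicator g (x, y)) ∂heightMeasure := by
        rw [← lintegral_indicator hQ, lintegral_prod_symm' _ (hg.indicator hQ)]
    _ = _ := by
        refine lintegral_congr fun y => ?_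
        rw [← lintegral_indicator measurableSet_ball]
        rfl

lemma setLIntegral_ball_hypMeasure_le_horizontalMaximal {g : ℝ × ℝ → ℝ≥0∞} (hg : Measurable g)
    {c z : ℍ} {r : ℝ} (hz : z ∈ ball c r) :
    ∫⁻ w in ball c r, g (w.re, w.im) ∂hypMeasure ≤
      ENNReal.ofReal (4 * Real.exp r) *
        (ENNReal.ofReal z.im ^ (1 / 2 : ℝ) * horizontalMaximal g z.re) := by
  have hw {y : ℝ} (hy : 0 < y) : ENNReal.ofReal (4 * (Real.exp r * √(z.im * y))) =
      ENNReal.ofReal (4 * Real.exp r) * ENNReal.ofReal z.im ^ (1 / 2 : ℝ) *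
        ENNReal.ofReal y ^ (1 / 2 : ℝ) := by
    rw [ENNReal.ofReal_rpow_of_pos z.im_pos, ENNReal.ofReal_rpow_of_pos hy,
      ← ENNReal.ofReal_mul (by positivity), ← ENNReal.ofReal_mul (by positivity),
      Real.sqrt_mul z.im_pos.le, Real.sqrt_eq_rpow, Real.sqrt_eq_rpow]
    ring_nf
  calc ∫⁻ w in ball c r, g (w.re, w.im) ∂hypMeasure
      ≤ ∫⁻ y, (∫⁻ x in ball z.re (Real.exp r * √(z.im * y)), g (x, y)) ∂heightMeasure :=
        setLIntegral_ball_hypMeasure_le hg hz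
    _ ≤ ∫⁻ y, ENNReal.ofReal (4 * Real.exp r) * ENNReal.ofReal z.im ^ (1 / 2 : ℝ) *
          (ENNReal.ofReal y ^ (1 / 2 : ℝ) *
            ballMaximal volume rationalIntervals (fun x => g (x, y)) z.re) ∂heightMeasure := by
        refine lintegral_mono_ae ?_
        filter_upwards [ae_heightMeasure_pos] with y hy
        have := z.im_pos
        rw [← mul_assoc, ← hw hy]
        exact setLIntegral_ball_le_mul_ballMaximal_rationalIntervals _ _ (by positivity)
    _ = _ := by rw [lintegral_const_mul' _ _ (by finiteness), mul_assoc, horizontalMaximal]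

lemma ballMaximal_hypMeasure_le_horizontalMaximal {g : ℝ × ℝ → ℝ≥0∞} (hg : Measurable g) (z : ℍ) :
    ballMaximal hypMeasure {b | 2 < b.2} (fun w => g (w.re, w.im)) z ≤
      ENNReal.ofReal z.im ^ (1 / 2 : ℝ) * (16 * horizontalMaximal g z.re) := by
  refine ballMaximal_le_iff.2 fun b hb hz => ?_
  have hexp : 0 < ENNReal.ofReal (Real.exp b.2 / 4) := ENNReal.ofReal_pos.2 (by positivity)
  calc (hypMeasure (ball b.1 b.2))⁻¹ * ∫⁻ w in ball b.1 b.2, g (w.re, w.im) ∂hypMeasure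
      ≤ (ENNReal.ofReal (Real.exp b.2 / 4))⁻¹ * (ENNReal.ofReal (4 * Real.exp b.2) *
          (ENNReal.ofReal z.im ^ (1 / 2 : ℝ) * horizontalMaximal g z.re)) := by
        gcongr
        · exact exp_div_four_le_hypMeasure_ball b.1 hb
        · exact setLIntegral_ball_hypMeasure_le_horizontalMaximal hg hz
    _ = _ := by
        rw [show 4 * Real.exp b.2 = Real.exp b.2 / 4 * 16 by ring,
          ENNReal.ofReal_mul (by positivity), mul_assoc,
          ENNReal.inv_mul_cancel_left hexp.ne' ENNReal.ofReal_ne_top, ENNReal.ofReal_ofNat,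
          mul_left_comm]

lemma exists_lintegral_sq_horizontalMaximal_le {a q : ℝ} (ha₁ : 1 < a) (ha₂ : a < 2)
    (hq : 2 < q) :
    ∃ C : ℝ≥0, ∀ g : ℝ × ℝ → ℝ≥0∞, Measurable g →
      ∫⁻ x, horizontalMaximal g x ^ 2 ≤
        C * (∫⁻ w, g w ^ a ∂volume.prod heightMeasure +
          ∫⁻ w, g w ^ q ∂volume.prod heightMeasure) := by
  obtain ⟨C, hC⟩ := exists_sq_lintegral_sqrt_mul_le ha₁ ha₂ hq
  have hslice {s : ℝ} (hs : 1 < s) :=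
    (hasStrongType_rationalIntervals hs).exists_lintegral_slice_le
      countable_rationalIntervals heightMeasure
  obtain ⟨A, hA⟩ := hslice ha₁
  obtain ⟨B, hB⟩ := hslice (show 1 < q by linarith)
  refine ⟨C * (A + B), fun g hg => ?_⟩
  let M (x y : ℝ) : ℝ≥0∞ := ballMaximal volume rationalIntervals (fun x' => g (x', y)) x
  have hM : Measurable (Function.uncurry M) :=
    measurable_ballMaximal_slice countable_rationalIntervals hg
  calc ∫⁻ x, horizontalMaximal g x ^ 2
      ≤ ∫⁻ x, C * (∫⁻ y, M x y ^ a ∂heightMeasure + ∫⁻ y, M x y ^ q ∂heightMeasure) :=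
        lintegral_mono fun x => hC (M x) hM.of_uncurry_left
    _ = C * ((∫⁻ x, ∫⁻ y, M x y ^ a ∂heightMeasure) + ∫⁻ x, ∫⁻ y, M x y ^ q ∂heightMeasure) := by
        rw [lintegral_const_mul' _ _ ENNReal.coe_ne_top, lintegral_add_left]
        exact (hM.pow_const a).lintegral_prod_right'
    _ ≤ C * ((A + B : ℝ≥0) * ∫⁻ w, g w ^ a ∂volume.prod heightMeasure +
          (A + B : ℝ≥0) * ∫⁻ w, g w ^ q ∂volume.prod heightMeasure) := by
        gcongr
        · exact (hA g hg).trans (mul_le_mul_left (ENNReal.coe_le_coe.2 le_self_add) _)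
        · exact (hB g hg).trans (mul_le_mul_left (ENNReal.coe_le_coe.2 le_add_self) _)
    _ = _ := by
        rw [← mul_add, ENNReal.coe_mul, mul_assoc]

lemma measure_one_lt_sqrt_mul_le {G : ℝ → ℝ≥0∞} (hG : Measurable G) :
    (volume.prod heightMeasure) {w | 1 < ENNReal.ofReal w.2 ^ (1 / 2 : ℝ) * G w.1} ≤
      ∫⁻ x, G x ^ 2 := by
  rw [Measure.prod_apply (measurableSet_lt measurable_const (by fun_prop))]
  exact lintegral_mono fun x => heightMeasure_one_lt_sqrt_mul_le (G x)

theorem hasTruncatedWeakType_hypMeasure_two_lt_radius {q : ℝ} (hq : 2 < q) :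
    HasTruncatedWeakType hypMeasure {b | 2 < b.2} q := by
  obtain ⟨C, hC⟩ := exists_lintegral_sq_horizontalMaximal_le
    (show (1 : ℝ) < 3 / 2 by norm_num) (by norm_num) hq
  refine ⟨16 ^ 2 * (C * 2), fun h hh hge => ?_⟩
  obtain ⟨g, hg, rfl⟩ := measurableEmbedding_re_im.exists_measurable_extend hh fun _ => ⟨0⟩
  have hφ := measurePreserving_re_im
  set φ : ℍ → ℝ × ℝ := fun z => (z.re, z.im)
  have hpow : ∫⁻ z, g (φ z) ^ (3 / 2 : ℝ) ∂hypMeasure ≤ ∫⁻ z, g (φ z) ^ q ∂hypMeasure := by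
    refine lintegral_mono fun z => ?_
    obtain h₀ | h₀ := eq_or_ne (g (φ z)) 0
    · rw [h₀, ENNReal.zero_rpow_of_pos (by norm_num)]
      exact zero_le
    · exact ENNReal.rpow_le_rpow_of_exponent_le (hge z h₀) (by linarith)
  have hset : MeasurableSet
      {w : ℝ × ℝ | 1 < ENNReal.ofReal w.2 ^ (1 / 2 : ℝ) * (16 * horizontalMaximal g w.1)} := by
    have := measurable_horizontalMaximal hg
    exact measurableSet_lt measurable_const (by fun_prop)
  calc hypMeasure {z | 1 < ballMaximal hypMeasure {b | 2 < b.2} (g ∘ φ) z}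
      ≤ hypMeasure (φ ⁻¹'
          {w | 1 < ENNReal.ofReal w.2 ^ (1 / 2 : ℝ) * (16 * horizontalMaximal g w.1)}) :=
        measure_mono fun z hz => hz.trans_le (ballMaximal_hypMeasure_le_horizontalMaximal hg z)
    _ ≤ ∫⁻ x, (16 * horizontalMaximal g x) ^ 2 := by
        rw [hφ.measure_preimage hset.nullMeasurableSet]
        exact measure_one_lt_sqrt_mul_le ((measurable_horizontalMaximal hg).const_mul _)
    _ = 16 ^ 2 * ∫⁻ x, horizontalMaximal g x ^ 2 := by
        simp_rw [mul_pow]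
        exact lintegral_const_mul' _ _ (by finiteness)
    _ ≤ 16 ^ 2 * (C * (∫⁻ z, g (φ z) ^ (3 / 2 : ℝ) ∂hypMeasure
          + ∫⁻ z, g (φ z) ^ q ∂hypMeasure)) := by
        rw [hφ.lintegral_comp (hg.pow_const _), hφ.lintegral_comp (hg.pow_const _)]
        exact mul_le_mul_right (hC g hg) _
    _ ≤ 16 ^ 2 * (C * (∫⁻ z, g (φ z) ^ q ∂hypMeasure + ∫⁻ z, g (φ z) ^ q ∂hypMeasure)) := by
        gcongr
    _ = (16 ^ 2 * (C * 2) : ℝ≥0) * ∫⁻ z, g (φ z) ^ q ∂hypMeasure := by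
        push_cast
        ring

end HypMeasure

/-- The noncentered maximal operator `M₂` is bounded on `L^p(ℍ)` for every `p ∈ (2,∞)`. -/
theorem M2_Lp (p : ℝ) (hp : 2 < p) :
    ∃ C : ℝ≥0, ∀ f : UpperHalfPlane → ℝ≥0∞, Measurable f →
      ∫⁻ z, M2 f z ^ p ∂hypMeasure ≤ C * ∫⁻ z, f z ^ p ∂hypMeasure := by
  have hsmall : HasStrongType hypMeasure {b | 0 < b.2 ∧ b.2 ≤ 2} p :=
    hasStrongType_hypMeasure_radius_le_two (by linarith)
  obtain ⟨q, hq, hqp⟩ := exists_between hp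
  have hlarge : HasStrongType hypMeasure {b | 2 < b.2} p :=
    (hasTruncatedWeakType_hypMeasure_two_lt_radius hq).hasStrongType (by linarith) hqp
  obtain ⟨C, hC⟩ := hsmall.union (by linarith) hlarge
  refine ⟨C, fun f hf => le_trans (lintegral_mono fun z => ?_) (hC f hf)⟩
  refine ENNReal.rpow_le_rpow (iSup₂_le fun c r => iSup₂_le fun hr hz => ?_) (by linarith)
  refine le_ballMaximal (b := (c, r)) ?_ hz
  exact (le_or_gt r 2).imp (fun h => ⟨hr, h⟩) id

end
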